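/- The conductance of the Gibbs sampler Markov chain for any discrete k-DPP is at least 1/(Ck²) for an absolute constant C, independent of the size n of the ground set. -/

import Mathlib

open Finset

/-- Determinant of the principal submatrix of `L` indexed by the finite set `S`. -/
noncomputable def gramDet {n : ℕ} (L : Matrix (Fin n) (Fin n) ℝ)
    (S : Finset (Fin n)) : ℝ :=
  Matrix.det (Matrix.of (fun i j : {x // x ∈ S} => L i.1 j.1))

/-- The `k`-DPP distribution on size-`k` subsets: `π(S) ∝ det(L_S)`. -/
noncomputable def dpp {n : ℕ} (L : Matrix (Fin n) (Fin n) ℝ) (k : ℕ)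
    (S : Finset (Fin n)) : ℝ :=
  if S.card = k then
    gramDet L S / ∑ T ∈ univ.filter (fun T : Finset (Fin n) => T.card = k), gramDet L T
  else 0

/-- Normalizing constant of the conditional distribution given the `(k−1)`-set `I`:
`π(I) = Σ_{j ∉ I} π(I ∪ {j})`. -/
noncomputable def condZ {n : ℕ} (π : Finset (Fin n) → ℝ) (I : Finset (Fin n)) : ℝ :=
  ∑ j ∈ Iᶜ, π (insert j I)

/-- Transition density of the Gibbs sampler for a `k`-DPP `π`: remove a uniformly
random element `i` of the current state `x` and resample a replacement `j` with
probability proportional to `π(x − i + j)`. -/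
noncomputable def gibbsP {n : ℕ} (π : Finset (Fin n) → ℝ) (k : ℕ)
    (x y : Finset (Fin n)) : ℝ :=
  (1 / (k : ℝ)) *
    ∑ i ∈ x, (if x.erase i ⊆ y ∧ y.card = k then π y / condZ π (x.erase i) else 0)

/-- Ergodic flow between two families of states: `Q(A,B) = Σ_{a∈A,b∈B} π(a)P(a,b)`. -/
noncomputable def flow {n : ℕ} (π : Finset (Fin n) → ℝ) (k : ℕ)
    (A B : Finset (Finset (Fin n))) : ℝ :=
  ∑ a ∈ A, ∑ b ∈ B, π a * gibbsP π k a b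


namespace GibbsAux

variable {n : ℕ}

/-- Schur complement with respect to the index `i`. -/
noncomputable def schur (L : Matrix (Fin n) (Fin n) ℝ) (i : Fin n) : Matrix (Fin n) (Fin n) ℝ :=
  Matrix.of fun a b => L a b - L a i * L i b / L i i

/-- The family of size `k` subsets. -/
def lev (n k : ℕ) : Finset (Finset (Fin n)) := univ.filter (fun T : Finset (Fin n) => T.card = k)

lemma mem_lev {k : ℕ} {S : Finset (Fin n)} : S ∈ lev n k ↔ S.card = k := by simp [lev]

lemma gramDet_nonneg {L : Matrix (Fin n) (Fin n) ℝ} (hL : L.PosSemidef) (S : Finset (Fin n)) :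
    0 ≤ gramDet L S :=
  (hL.submatrix (fun i : {x // x ∈ S} => i.1)).det_nonneg

lemma gramDet_pos {L : Matrix (Fin n) (Fin n) ℝ} (hL : L.PosDef) (S : Finset (Fin n)) :
    0 < gramDet L S :=
  (hL.submatrix (e := fun i : {x // x ∈ S} => i.1) Subtype.val_injective).det_pos

lemma gramDet_eq_zero {L : Matrix (Fin n) (Fin n) ℝ} (hL : L.PosSemidef) {S : Finset (Fin n)}
    {i : Fin n} (hi : i ∈ S) (h0 : L i i = 0) : gramDet L S = 0 := by
  by_contra h
  have h1 := (hL.submatrix (fun i : {x // x ∈ S} => i.1)).posDef_iff_det_ne_zero.2 h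
  have h2 := h1.diag_pos (i := ⟨i, hi⟩)
  simp [h0] at h2

lemma gramDet_schur_zero (L : Matrix (Fin n) (Fin n) ℝ) {S : Finset (Fin n)}
    {i : Fin n} (hi : i ∈ S) (h0 : L i i ≠ 0) : gramDet (schur L i) S = 0 := by
  apply Matrix.det_eq_zero_of_row_eq_zero ⟨i, hi⟩
  intro j
  simp only [schur, Matrix.of_apply]
  field_simp
  ring

lemma gramDet_insert (L : Matrix (Fin n) (Fin n) ℝ) {S : Finset (Fin n)}
    {i : Fin n} (hi : i ∉ S) (h0 : L i i ≠ 0) :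
    gramDet L (insert i S) = L i i * gramDet (schur L i) S := by
  let e : Unit ⊕ {x // x ∈ S} ≃ {x // x ∈ insert i S} :=
    ((Equiv.sumComm _ _).trans (Equiv.optionEquivSumPUnit _).symm).trans
      (Finset.subtypeInsertEquivOption hi).symm
  have he0 : ∀ u, (e (Sum.inl u)).1 = i := fun u => rfl
  have he1 : ∀ s, (e (Sum.inr s)).1 = s.1 := fun u => rfl
  unfold gramDet
  rw [← Matrix.det_submatrix_equiv_self e]
  have hb : (Matrix.of (fun a b : {x // x ∈ insert i S} => L a.1 b.1)).submatrix e e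
      = Matrix.fromBlocks (Matrix.of fun _ _ : Unit => L i i)
        (Matrix.of fun (_ : Unit) (b : {x // x ∈ S}) => L i b.1)
        (Matrix.of fun (a : {x // x ∈ S}) (_ : Unit) => L a.1 i)
        (Matrix.of fun (a b : {x // x ∈ S}) => L a.1 b.1) := by
    ext a b
    rcases a with a | a <;> rcases b with b | b <;>
      simp [he0, he1]
  rw [hb]
  have hdet : (Matrix.of fun _ _ : Unit => L i i).det = L i i := by simp
  have : Invertible (Matrix.of fun _ _ : Unit => L i i) :=
    Matrix.invertibleOfIsUnitDet _ (by rw [hdet]; exact isUnit_iff_ne_zero.2 h0)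
  rw [Matrix.det_fromBlocks₁₁, hdet]
  congr 2
  have hinv : ⅟(Matrix.of fun _ _ : Unit => L i i) = Matrix.of fun _ _ : Unit => (L i i)⁻¹ := by
    apply invOf_eq_right_inv
    ext a b
    simp [Matrix.mul_apply, h0]
  rw [hinv]
  ext a b
  simp [schur, Matrix.mul_apply]
  field_simp

lemma schur_posSemidef {L : Matrix (Fin n) (Fin n) ℝ} (hL : L.PosSemidef) (i : Fin n) :
    (schur L i).PosSemidef := by
  by_cases h0 : L i i = 0
  · have : schur L i = L := by ext a b; simp [schur, h0]
    rw [this]; exact hL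
  have hs : ∀ a b, L a b = L b a := fun a b => by
    have := hL.isHermitian.apply b a
    simpa using this
  refine Matrix.PosSemidef.of_dotProduct_mulVec_nonneg ?_ ?_
  · ext a b
    simp [schur, hs b a, hs i a, hs i b, mul_comm]
  · intro x
    have h1 := hL.dotProduct_mulVec_nonneg (x - ((L.mulVec x) i / L i i) • Pi.single i 1)
    have h2 : (schur L i).mulVec x = L.mulVec x - ((L.mulVec x) i / L i i) • L.col i := by
      ext a
      simp only [schur, Matrix.mulVec, dotProduct, Matrix.of_apply, Pi.sub_apply, Pi.smul_apply,
        smul_eq_mul, Matrix.col_apply, sub_mul, Finset.sum_sub_distrib]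
      congr 1
      rw [Finset.sum_div, Finset.sum_mul]
      exact Finset.sum_congr rfl fun j _ => by ring
    have h3 : x ⬝ᵥ L.col i = L.mulVec x i := by
      simp only [Matrix.mulVec, dotProduct, Matrix.col_apply]
      exact Finset.sum_congr rfl fun j _ => by rw [hs i j]; ring
    simp only [star_trivial] at h1 ⊢
    rw [h2, dotProduct_sub, dotProduct_smul, h3]
    rw [Matrix.mulVec_sub, Matrix.mulVec_smul, Matrix.mulVec_single_one, sub_dotProduct,
      dotProduct_sub, dotProduct_sub, dotProduct_smul, smul_dotProduct, smul_dotProduct,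
      dotProduct_smul, h3, single_dotProduct, single_dotProduct] at h1
    simp only [Matrix.col_apply, smul_eq_mul, one_mul] at h1
    have h4 : L.mulVec x i / L i i * (L.mulVec x i / L i i * L i i)
        = L.mulVec x i / L i i * L.mulVec x i := by
      field_simp
    simp only [smul_eq_mul]
    linarith

/-- Summing over the link of `i`. -/
lemma link_sum {L : Matrix (Fin n) (Fin n) ℝ} (hL : L.PosSemidef) (i : Fin n) (k : ℕ)
    (φ : Finset (Fin n) → ℝ) :
    L i i * ∑ T ∈ lev n k, gramDet (schur L i) T * φ T
      = ∑ S ∈ (lev n (k + 1)).filter (fun S => i ∈ S), gramDet L S * φ (S.erase i) := by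
  by_cases h0 : L i i = 0
  · rw [h0, zero_mul]
    symm
    apply Finset.sum_eq_zero
    intro S hS
    rw [gramDet_eq_zero hL (Finset.mem_filter.1 hS).2 h0, zero_mul]
  · rw [← Finset.sum_filter_add_sum_filter_not (lev n k) (fun T => i ∈ T)]
    rw [Finset.sum_eq_zero (s := (lev n k).filter (fun T => i ∈ T)), zero_add, Finset.mul_sum]
    · refine Finset.sum_bij' (fun T _ => insert i T) (fun S _ => S.erase i) ?_ ?_ ?_ ?_ ?_
      · intro T hT
        simp only [Finset.mem_filter, mem_lev] at hT ⊢
        rw [Finset.card_insert_of_notMem hT.2, hT.1]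
        simp
      · intro T hT
        simp only [Finset.mem_filter, mem_lev] at hT ⊢
        rw [Finset.card_erase_of_mem hT.2, hT.1]
        simp
      · intro T hT
        simp only [Finset.mem_filter] at hT
        exact Finset.erase_insert hT.2
      · intro T hT
        simp only [Finset.mem_filter] at hT
        exact Finset.insert_erase hT.2
      · intro T hT
        simp only [Finset.mem_filter] at hT
        rw [gramDet_insert L hT.2 h0, Finset.erase_insert hT.2, mul_assoc]
    · intro T hT
      rw [gramDet_schur_zero L (Finset.mem_filter.1 hT).2 h0, zero_mul]

/-- Double counting. -/
lemma sum_swap (k : ℕ) (F : Fin n → Finset (Fin n) → ℝ) :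
    ∑ i, ∑ S ∈ (lev n k).filter (fun S => i ∈ S), F i S = ∑ S ∈ lev n k, ∑ i ∈ S, F i S := by
  apply Finset.sum_comm'
  intro i S
  simp [and_comm]

lemma spectral_neg (B : Matrix (Fin n) (Fin n) ℝ) (hB : B.IsHermitian)
    (h1 : ∀ x : Fin n → ℝ, x ⬝ᵥ B.mulVec x ≤ B.mulVec x ⬝ᵥ B.mulVec x)
    (g : Fin n → ℝ)
    (h2 : ∀ x : Fin n → ℝ, x ⬝ᵥ x ≤ x ⬝ᵥ B.mulVec x → x ⬝ᵥ g = 0) :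
    g ⬝ᵥ B.mulVec g ≤ 0 := by
  set v : Fin n → Fin n → ℝ := fun j => (hB.eigenvectorBasis j).ofLp with hv
  have hev : ∀ j, B.mulVec (v j) = hB.eigenvalues j • v j := fun j => hB.mulVec_eigenvectorBasis j
  have hexp : g = ∑ j, (v j ⬝ᵥ g) • v j := by
    have := hB.eigenvectorBasis.sum_repr' (WithLp.toLp 2 g)
    have h3 := congrArg WithLp.ofLp this
    simp only [WithLp.ofLp_sum, WithLp.ofLp_smul] at h3
    conv_lhs => rw [← h3]
    refine Finset.sum_congr rfl fun j _ => ?_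
    congr 1
    simp [hv, PiLp.inner_apply, dotProduct, mul_comm]
  have hself : ∀ j, v j ⬝ᵥ v j = 1 := by
    intro j
    have := hB.eigenvectorBasis.orthonormal.1 j
    have h4 : inner ℝ (hB.eigenvectorBasis j) (hB.eigenvectorBasis j) = (1 : ℝ) := by
      rw [real_inner_self_eq_norm_sq, this]; norm_num
    rw [← h4, PiLp.inner_apply]
    simp only [hv, dotProduct]
    rfl
  have key : ∀ j, hB.eigenvalues j * (v j ⬝ᵥ g) ^ 2 ≤ 0 := by
    intro j
    have h5 := h1 (v j)
    rw [hev] at h5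
    simp only [dotProduct_smul, smul_dotProduct, hself, smul_eq_mul, mul_one] at h5
    by_cases hp : hB.eigenvalues j ≤ 0
    · exact mul_nonpos_of_nonpos_of_nonneg hp (sq_nonneg _)
    · push Not at hp
      have h6 : 1 ≤ hB.eigenvalues j := by nlinarith
      have h7 := h2 (v j) (by rw [hev, dotProduct_smul, hself]; simpa using h6)
      rw [h7]; simp
  have : g ⬝ᵥ B.mulVec g = ∑ j, hB.eigenvalues j * (v j ⬝ᵥ g) ^ 2 := by
    conv_lhs => rw [hexp]
    rw [← hexp]
    have hBg : B.mulVec (∑ j, (v j ⬝ᵥ g) • v j) = ∑ j, (v j ⬝ᵥ g) • (hB.eigenvalues j • v j) := by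
      rw [← Matrix.mulVecLin_apply, map_sum]
      refine Finset.sum_congr rfl fun j _ => ?_
      rw [map_smul, Matrix.mulVecLin_apply, hev]
    conv_lhs => rw [hexp, hBg]
    rw [← hexp, dotProduct_sum]
    refine Finset.sum_congr rfl fun j _ => ?_
    rw [dotProduct_smul, dotProduct_smul, dotProduct_comm g (v j)]
    simp only [smul_eq_mul]; ring
  rw [this]
  exact Finset.sum_nonpos fun j _ => key j

lemma trickle (A : Matrix (Fin n) (Fin n) ℝ) (hA : ∀ i j, A i j = A j i)
    (hpos : ∀ i j, i ≠ j → 0 < A i j) (d : Fin n → ℝ) (hd : ∀ i, 0 < d i)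
    (hrow : ∀ i, ∑ j, A i j = d i)
    (h1 : ∀ g : Fin n → ℝ, ∑ i, g i * ∑ j, A i j * g j ≤ ∑ i, (∑ j, A i j * g j) ^ 2 / d i)
    (g : Fin n → ℝ) :
    (∑ i, d i) * ∑ i, g i * ∑ j, A i j * g j ≤ (∑ i, d i * g i) ^ 2 := by
  -- centered case
  have hcen : ∀ g : Fin n → ℝ, ∑ i, d i * g i = 0 → ∑ i, g i * ∑ j, A i j * g j ≤ 0 := by
    intro g hg
    set s : Fin n → ℝ := fun i => Real.sqrt (d i) with hs
    have hs0 : ∀ i, 0 < s i := fun i => Real.sqrt_pos.2 (hd i)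
    have hs2 : ∀ i, s i * s i = d i := fun i => Real.mul_self_sqrt (hd i).le
    let B : Matrix (Fin n) (Fin n) ℝ := Matrix.of fun i j => A i j / (s i * s j)
    have hBx : ∀ x : Fin n → ℝ, ∀ i, B.mulVec x i = (∑ j, A i j * (x j / s j)) / s i := by
      intro x i
      simp only [B, Matrix.mulVec, dotProduct, Matrix.of_apply]
      rw [Finset.sum_div]
      refine Finset.sum_congr rfl fun j _ => ?_
      have := (hs0 i).ne'; have := (hs0 j).ne'
      field_simp
    have hq : ∀ x : Fin n → ℝ, x ⬝ᵥ B.mulVec x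
        = ∑ i, (x i / s i) * ∑ j, A i j * (x j / s j) := by
      intro x
      simp only [dotProduct, hBx]
      refine Finset.sum_congr rfl fun j _ => ?_
      have := (hs0 j).ne'
      field_simp
    have hmain := spectral_neg B (by ext i j; simp [B, hA i j, mul_comm])
      (by
        intro x
        rw [hq]
        refine (h1 (fun i => x i / s i)).trans (le_of_eq ?_)
        simp only [dotProduct, hBx]
        refine Finset.sum_congr rfl fun j _ => ?_
        rw [← hs2 j, div_mul_div_comm, sq])
      (fun i => g i * s i)
      (by
        intro x hx
        rw [hq] at hx
        set y : Fin n → ℝ := fun i => x i / s i with hy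
        have hxy : ∀ i, x i = y i * s i := fun i => by
          have := (hs0 i).ne'
          simp only [hy]; field_simp
        have hxx : x ⬝ᵥ x = ∑ i, d i * y i ^ 2 := by
          simp only [dotProduct]
          refine Finset.sum_congr rfl fun j _ => ?_
          rw [hxy, ← hs2]; ring
        have hsq : ∑ i, ∑ j, A i j * (y i - y j) ^ 2
            = 2 * (∑ i, d i * y i ^ 2) - 2 * ∑ i, y i * ∑ j, A i j * y j := by
          have e1 : ∑ i, d i * y i ^ 2 = ∑ i, ∑ j, A i j * y i ^ 2 := by
            refine Finset.sum_congr rfl fun j _ => ?_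
            rw [← hrow, Finset.sum_mul]
          have e2 : ∑ i, d i * y i ^ 2 = ∑ i, ∑ j, A i j * y j ^ 2 := by
            rw [e1, Finset.sum_comm]
            refine Finset.sum_congr rfl fun j _ => Finset.sum_congr rfl fun i _ => ?_
            rw [hA]
          have e3 : 2 * ∑ i, d i * y i ^ 2
              = ∑ i, ∑ j, A i j * y i ^ 2 + ∑ i, ∑ j, A i j * y j ^ 2 := by
            rw [← e1, ← e2]; ring
          rw [e3, Finset.mul_sum, ← Finset.sum_add_distrib, ← Finset.sum_sub_distrib]
          refine Finset.sum_congr rfl fun i _ => ?_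
          rw [← Finset.sum_add_distrib, Finset.mul_sum, Finset.mul_sum, ← Finset.sum_sub_distrib]
          refine Finset.sum_congr rfl fun j _ => ?_
          ring
        have hnn : ∀ i j, 0 ≤ A i j * (y i - y j) ^ 2 := by
          intro i j
          by_cases hij : i = j
          · subst hij; simp
          · exact mul_nonneg (hpos i j hij).le (sq_nonneg _)
        have hz : ∑ i, ∑ j, A i j * (y i - y j) ^ 2 = 0 := by
          apply le_antisymm
          · rw [hsq]; rw [hxx] at hx; linarith
          · exact Finset.sum_nonneg fun i _ => Finset.sum_nonneg fun j _ => hnn i j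
        have heq : ∀ i j, y i = y j := by
          intro i j
          by_cases hij : i = j
          · rw [hij]
          have hz1 := (Finset.sum_eq_zero_iff_of_nonneg
            (fun i _ => Finset.sum_nonneg fun j _ => hnn i j)).1 hz i (Finset.mem_univ _)
          have hz2 := (Finset.sum_eq_zero_iff_of_nonneg (fun j _ => hnn i j)).1 hz1 j
            (Finset.mem_univ _)
          rcases mul_eq_zero.1 hz2 with h | h
          · exact absurd h (hpos i j hij).ne'
          · exact sub_eq_zero.1 (pow_eq_zero_iff (two_ne_zero) |>.1 h)
        have e4 : x ⬝ᵥ (fun i => g i * s i) = ∑ i, y i * (d i * g i) := by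
          simp only [dotProduct]
          refine Finset.sum_congr rfl fun j _ => ?_
          rw [hxy, ← hs2]; ring
        rw [e4]
        rcases isEmpty_or_nonempty (Fin n) with hE | ⟨⟨i0⟩⟩
        · simp
        · rw [Finset.sum_congr rfl (fun i _ => by rw [heq i i0]), ← Finset.mul_sum, hg, mul_zero])
    rw [hq] at hmain
    refine le_trans (le_of_eq ?_) hmain
    have : ∀ i, g i * s i / s i = g i := fun i => by
      have := (hs0 i).ne'
      field_simp
    simp only [this]
  rcases isEmpty_or_nonempty (Fin n) with hE | ⟨⟨i0⟩⟩
  · simp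
  have hD : 0 < ∑ i, d i := Finset.sum_pos (fun i _ => hd i) ⟨i0, Finset.mem_univ _⟩
  set D := ∑ i, d i with hDdef
  set c := (∑ i, d i * g i) / D with hc
  have hcD : ∑ i, d i * g i = c * D := by rw [hc]; field_simp
  have h3 := hcen (fun i => g i - c) (by
    simp only [mul_sub, Finset.sum_sub_distrib, ← Finset.sum_mul]
    rw [hcD]; ring)
  have h4 : ∑ i, (g i - c) * ∑ j, A i j * (g j - c)
      = ∑ i, g i * ∑ j, A i j * g j - c ^ 2 * D := by
    have e0 : ∀ i, ∑ j, A i j * (g j - c) = ∑ j, A i j * g j - c * d i := by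
      intro i
      simp only [mul_sub, Finset.sum_sub_distrib, ← Finset.sum_mul, hrow]
      ring
    have e1 : ∑ i, ∑ j, A i j * g j = c * D := by
      rw [Finset.sum_comm, ← hcD]
      refine Finset.sum_congr rfl fun j _ => ?_
      rw [← hrow, Finset.sum_mul]
      exact Finset.sum_congr rfl fun i _ => by rw [hA]
    have e2 : ∀ i, (g i - c) * ∑ j, A i j * (g j - c)
        = g i * ∑ j, A i j * g j - c * (∑ j, A i j * g j) - c * (d i * g i) + c ^ 2 * d i := by
      intro i; rw [e0]; ring
    simp only [e2, Finset.sum_add_distrib, Finset.sum_sub_distrib, ← Finset.mul_sum]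
    rw [e1, hcD]; ring
  rw [h4] at h3
  rw [hcD]
  nlinarith

/-- Log-concavity inequality at level `k`. -/
def LC (L : Matrix (Fin n) (Fin n) ℝ) (k : ℕ) : Prop :=
  ∀ g : Fin n → ℝ,
    (k : ℝ) * (∑ S ∈ lev n k, gramDet L S) *
      (∑ S ∈ lev n k, gramDet L S * ((∑ i ∈ S, g i) ^ 2 - ∑ i ∈ S, g i ^ 2))
    ≤ ((k : ℝ) - 1) * (∑ S ∈ lev n k, gramDet L S * ∑ i ∈ S, g i) ^ 2

lemma LC_limit (k : ℕ) (h : ∀ L : Matrix (Fin n) (Fin n) ℝ, L.PosDef → LC L k)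
    (L : Matrix (Fin n) (Fin n) ℝ) (hL : L.PosSemidef) : LC L k := by
  intro g
  have hc : ∀ S : Finset (Fin n), Continuous fun ε : ℝ => gramDet (L + ε • 1) S := by
    intro S
    unfold gramDet
    apply Continuous.matrix_det
    apply continuous_matrix
    intro i j
    simp only [Matrix.of_apply, Matrix.add_apply, Matrix.smul_apply]
    fun_prop
  have h0 : L = L + (0 : ℝ) • 1 := by simp
  have c1 : Continuous fun ε : ℝ => (k : ℝ) * (∑ S ∈ lev n k, gramDet (L + ε • 1) S) *
      (∑ S ∈ lev n k, gramDet (L + ε • 1) S * ((∑ i ∈ S, g i) ^ 2 - ∑ i ∈ S, g i ^ 2)) := by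
    fun_prop
  have c2 : Continuous fun ε : ℝ =>
      ((k : ℝ) - 1) * (∑ S ∈ lev n k, gramDet (L + ε • 1) S * ∑ i ∈ S, g i) ^ 2 := by
    fun_prop
  rw [h0]
  refine le_of_tendsto_of_tendsto (b := nhdsWithin (0 : ℝ) (Set.Ioi 0))
    (c1.tendsto 0 |>.mono_left nhdsWithin_le_nhds) (c2.tendsto 0 |>.mono_left nhdsWithin_le_nhds) ?_
  filter_upwards [self_mem_nhdsWithin] with ε hε
  exact h _ (Matrix.PosDef.posSemidef_add hL (Matrix.PosDef.one.smul hε)) g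

lemma gramDet_singleton (M : Matrix (Fin n) (Fin n) ℝ) (j : Fin n) : gramDet M {j} = M j j := by
  unfold gramDet
  rw [Matrix.det_eq_elem_of_subsingleton _ ⟨j, Finset.mem_singleton_self j⟩]
  rfl

lemma sum_lev_one (F : Finset (Fin n) → ℝ) : ∑ T ∈ lev n 1, F T = ∑ j, F {j} := by
  have : lev n 1 = Finset.powersetCard 1 univ := by
    ext S; simp [mem_lev, Finset.mem_powersetCard]
  rw [this, Finset.powersetCard_one, Finset.sum_map]
  rfl

lemma sum_lev_two {L : Matrix (Fin n) (Fin n) ℝ} (hL : L.PosDef)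
    (φ : Fin n → Finset (Fin n) → ℝ) :
    ∑ S ∈ lev n 2, gramDet L S * ∑ i ∈ S, φ i (S.erase i)
      = ∑ i, ∑ j, (L i i * L j j - L i j ^ 2) * φ i {j} := by
  simp only [Finset.mul_sum]
  rw [← sum_swap 2 (fun i S => gramDet L S * φ i (S.erase i))]
  refine Finset.sum_congr rfl fun i _ => ?_
  rw [← link_sum hL.posSemidef i 1 (φ i), sum_lev_one, Finset.mul_sum]
  refine Finset.sum_congr rfl fun j _ => ?_
  rw [gramDet_singleton]
  have h0 := (hL.diag_pos (i := i)).ne'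
  have hs : L j i = L i j := by simpa using hL.isHermitian.apply i j
  simp only [schur, Matrix.of_apply, hs]
  field_simp

lemma sum_erase_id (S : Finset (Fin n)) (g : Fin n → ℝ) :
    ∑ i ∈ S, g i * ∑ j ∈ S.erase i, g j = (∑ i ∈ S, g i) ^ 2 - ∑ i ∈ S, g i ^ 2 := by
  rw [sq, Finset.sum_mul, ← Finset.sum_sub_distrib]
  refine Finset.sum_congr rfl fun i hi => ?_
  rw [Finset.sum_erase_eq_sub hi]; ring

lemma quad_aux (a b c l m : ℝ) (hq : ∀ t : ℝ, 0 ≤ a * (t * t) + 2 * b * t + c)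
    (hla : a ≤ l ^ 2) : (l ^ 2 - a) * (m ^ 2 - c) ≤ (l * m - b) ^ 2 := by
  have hd := discrim_le_zero (fun t => by simpa using hq t)
  unfold discrim at hd
  have hc : 0 ≤ c := by simpa using hq 0
  have ha : 0 ≤ a := by
    by_contra hneg
    push Not at hneg
    nlinarith [hq 0, hq 1, hq (-1), hd, mul_nonneg hc (neg_nonneg.2 hneg.le),
      hq ((c + 1) / (-a) + 1), hq (-((c + 1) / (-a) + 1)),
      mul_self_nonneg ((c + 1) / (-a)), div_mul_cancel₀ (c + 1) (neg_pos.2 hneg).ne',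
      div_nonneg (by linarith : 0 ≤ c + 1) (neg_pos.2 hneg).le]
  rcases ha.eq_or_lt with h | h
  · subst h
    have : b = 0 := by nlinarith [sq_nonneg b]
    subst this
    nlinarith [mul_nonneg (sq_nonneg l) hc]
  · have : 0 ≤ a * ((l * m - b) ^ 2 - (l ^ 2 - a) * (m ^ 2 - c)) := by
      have e : a * ((l * m - b) ^ 2 - (l ^ 2 - a) * (m ^ 2 - c))
          = (a * m - l * b) ^ 2 + (l ^ 2 - a) * (a * c - b ^ 2) := by ring
      rw [e]
      have := mul_nonneg (sub_nonneg.2 hla) (by linarith : 0 ≤ a * c - b ^ 2)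
      nlinarith [sq_nonneg (a * m - l * b)]
    have := nonneg_of_mul_nonneg_right this h
    linarith

lemma LC_two_pd {L : Matrix (Fin n) (Fin n) ℝ} (hL : L.PosDef) : LC L 2 := by
  intro g
  have hs : ∀ i j, L j i = L i j := fun i j => by simpa using hL.isHermitian.apply i j
  have e1 : (2 : ℝ) * (∑ S ∈ lev n 2, gramDet L S)
      = ∑ i, ∑ j, (L i i * L j j - L i j ^ 2) * 1 := by
    rw [← sum_lev_two hL (fun _ _ => 1), Finset.mul_sum]
    refine Finset.sum_congr rfl fun S hS => ?_
    rw [mem_lev] at hS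
    simp [hS]; ring
  have e2 : ∑ S ∈ lev n 2, gramDet L S * ((∑ i ∈ S, g i) ^ 2 - ∑ i ∈ S, g i ^ 2)
      = ∑ i, ∑ j, (L i i * L j j - L i j ^ 2) * (g i * g j) := by
    have := sum_lev_two hL (fun i T => g i * ∑ j ∈ T, g j)
    simp only [Finset.sum_singleton] at this
    rw [← this]
    refine Finset.sum_congr rfl fun S hS => ?_
    rw [sum_erase_id]
  have e3 : ∑ S ∈ lev n 2, gramDet L S * ∑ i ∈ S, g i
      = ∑ i, ∑ j, (L i i * L j j - L i j ^ 2) * g i :=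
    sum_lev_two hL (fun i T => g i)
  have hH := (hL.posSemidef.hadamard hL.posSemidef)
  have hq : ∀ x : Fin n → ℝ, 0 ≤ ∑ i, ∑ j, L i j ^ 2 * (x i * x j) := by
    intro x
    have := hH.dotProduct_mulVec_nonneg x
    refine this.trans (le_of_eq ?_)
    simp only [star_trivial, dotProduct, Matrix.mulVec, Finset.mul_sum, Matrix.hadamard_apply]
    exact Finset.sum_congr rfl fun i _ => Finset.sum_congr rfl fun j _ => by ring
  set a := ∑ i, ∑ j, L i j ^ 2 with ha
  set b := ∑ i, ∑ j, L i j ^ 2 * g i with hb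
  set c := ∑ i, ∑ j, L i j ^ 2 * (g i * g j) with hc
  set l := ∑ i, L i i with hl
  set m := ∑ i, L i i * g i with hm
  have hb' : b = ∑ i, ∑ j, L i j ^ 2 * g j := by
    rw [hb, Finset.sum_comm]
    exact Finset.sum_congr rfl fun i _ => Finset.sum_congr rfl fun j _ => by rw [hs]
  have f1 : ∑ i, ∑ j, (L i i * L j j - L i j ^ 2) * 1 = l ^ 2 - a := by
    simp only [mul_one, Finset.sum_sub_distrib]
    rw [hl, sq, Finset.sum_mul_sum]
  have f2 : ∑ i, ∑ j, (L i i * L j j - L i j ^ 2) * (g i * g j) = m ^ 2 - c := by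
    simp only [sub_mul, Finset.sum_sub_distrib]
    rw [hm, sq, Finset.sum_mul_sum]
    congr 1
    exact Finset.sum_congr rfl fun i _ => Finset.sum_congr rfl fun j _ => by ring
  have f3 : ∑ i, ∑ j, (L i i * L j j - L i j ^ 2) * g i = l * m - b := by
    simp only [sub_mul, Finset.sum_sub_distrib]
    rw [mul_comm l m, hm, hl, Finset.sum_mul_sum]
    congr 1
    exact Finset.sum_congr rfl fun i _ => Finset.sum_congr rfl fun j _ => by ring
  push_cast
  rw [e1, e2, e3, f1, f2, f3]
  have hZ : 0 ≤ l ^ 2 - a := by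
    rw [← f1, ← e1]
    exact mul_nonneg (by norm_num) (Finset.sum_nonneg fun S _ => gramDet_nonneg hL.posSemidef S)
  have := quad_aux a b c l m (by
    intro t
    refine (hq (fun i => t + g i)).trans (le_of_eq ?_)
    have : ∀ i j, L i j ^ 2 * ((t + g i) * (t + g j)) = (t * t) * L i j ^ 2
        + t * (L i j ^ 2 * g i) + t * (L i j ^ 2 * g j) + L i j ^ 2 * (g i * g j) := by
      intro i j; ring
    simp only [this, Finset.sum_add_distrib, ← Finset.mul_sum]
    rw [← ha, ← hb, ← hb', ← hc]; ring) (by linarith)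
  linarith

lemma LC_step (k : ℕ) (hk : 2 ≤ k)
    (ih : ∀ L : Matrix (Fin n) (Fin n) ℝ, L.PosSemidef → LC L k)
    {L : Matrix (Fin n) (Fin n) ℝ} (hL : L.PosDef) : LC L (k + 1) := by
  by_cases hn : k + 1 ≤ n
  swap
  · have : lev n (k + 1) = ∅ := by
      ext S
      simp only [mem_lev, Finset.notMem_empty, iff_false]
      have := S.card_le_univ
      simp at this
      omega
    intro g
    simp [this]
  have hk2 : (2 : ℝ) ≤ k := by exact_mod_cast hk
  have hps := hL.posSemidef
  let st : Fin n → Finset (Finset (Fin n)) := fun i => (lev n (k + 1)).filter (fun S => i ∈ S)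
  let A : Matrix (Fin n) (Fin n) ℝ := Matrix.of fun i j =>
    ∑ S ∈ st i, gramDet L S * (if j ∈ S.erase i then 1 else 0)
  let m : Fin n → ℝ := fun i => ∑ S ∈ st i, gramDet L S
  have hex : ∀ T : Finset (Fin n), T.card ≤ k + 1 → ∃ S ∈ lev n (k + 1), T ⊆ S := by
    intro T hT
    obtain ⟨S, h1, h2⟩ := Finset.exists_superset_card_eq hT (by simpa using hn)
    exact ⟨S, mem_lev.2 h2, h1⟩
  have hAg : ∀ (g : Fin n → ℝ) i,
      ∑ j, A i j * g j = ∑ S ∈ st i, gramDet L S * ∑ j ∈ S.erase i, g j := by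
    intro g i
    simp only [A, Matrix.of_apply, Finset.sum_mul]
    rw [Finset.sum_comm]
    refine Finset.sum_congr rfl fun S _ => ?_
    simp only [mul_assoc, ← Finset.mul_sum]
    congr 1
    simp only [ite_mul, one_mul, zero_mul, Finset.sum_ite_mem, Finset.univ_inter]
  have hX : ∀ g : Fin n → ℝ, ∑ i, g i * ∑ j, A i j * g j
      = ∑ S ∈ lev n (k + 1), gramDet L S * ((∑ i ∈ S, g i) ^ 2 - ∑ i ∈ S, g i ^ 2) := by
    intro g
    simp only [hAg]
    refine (Finset.sum_congr rfl fun i _ => Finset.mul_sum _ _ _).trans ?_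
    refine (sum_swap (k + 1) (fun i S => g i * (gramDet L S * ∑ j ∈ S.erase i, g j))).trans ?_
    refine Finset.sum_congr rfl fun S _ => ?_
    rw [← sum_erase_id, Finset.mul_sum]
    exact Finset.sum_congr rfl fun i _ => by ring
  have hmpos : ∀ i, 0 < m i := by
    intro i
    obtain ⟨S, hS, hiS⟩ := hex {i} (by simp)
    exact Finset.sum_pos (fun S _ => gramDet_pos hL S)
      ⟨S, Finset.mem_filter.2 ⟨hS, by simpa using hiS⟩⟩
  have hT := trickle A
    (by
      intro i j
      simp only [A, Matrix.of_apply, st, Finset.sum_filter]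
      refine Finset.sum_congr rfl fun S _ => ?_
      by_cases h1 : i ∈ S <;> by_cases h2 : j ∈ S <;> by_cases h3 : i = j <;>
        simp [h1, h2, h3, Ne.symm])
    (by
      intro i j hij
      obtain ⟨S, hS, hiS⟩ := hex {i, j} (by
        have := Finset.card_le_two (a := i) (b := j); omega)
      have hi : i ∈ S := hiS (by simp)
      have hj : j ∈ S := hiS (by simp)
      refine Finset.sum_pos' (fun S _ => ?_) ⟨S, Finset.mem_filter.2 ⟨hS, hi⟩, ?_⟩
      · split_ifs <;> simp [(gramDet_pos hL S).le]
      · simp [hj, Ne.symm hij, gramDet_pos hL S])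
    (fun i => (k : ℝ) * m i)
    (fun i => mul_pos (by linarith) (hmpos i))
    (by
      intro i
      have := hAg (fun _ => 1) i
      simp only [mul_one] at this
      rw [this]
      simp only [m, Finset.mul_sum]
      refine Finset.sum_congr rfl fun S hS => ?_
      simp only [st, Finset.mem_filter, mem_lev] at hS
      rw [Finset.sum_const, Finset.card_erase_of_mem hS.2, hS.1]
      simp [mul_comm])
    (by
      intro g
      have hlk : ∀ i, (∑ S ∈ st i, gramDet L S *
          ((∑ j ∈ S.erase i, g j) ^ 2 - ∑ j ∈ S.erase i, g j ^ 2))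
          ≤ ((k : ℝ) - 1) * ((∑ j, A i j * g j) ^ 2 / (k * m i)) := by
        intro i
        have h1 := ih (schur L i) (schur_posSemidef hps i) g
        have h2 := link_sum hps i k (fun T => (∑ j ∈ T, g j) ^ 2 - ∑ j ∈ T, g j ^ 2)
        have h3 := link_sum hps i k (fun T => ∑ j ∈ T, g j)
        have h4 := link_sum hps i k (fun T => 1)
        simp only [mul_one] at h4
        rw [hAg]
        change _ = ∑ S ∈ st i, _ at h2
        change _ = ∑ S ∈ st i, _ at h3
        change _ = m i at h4
        rw [← h2, ← h3]
        have hm := hmpos i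
        have hkm : 0 < (k : ℝ) * m i := mul_pos (by linarith) hm
        rw [← mul_div_assoc, le_div_iff₀ hkm]
        rw [← h4]
        have := mul_le_mul_of_nonneg_left h1 (sq_nonneg (L i i))
        linarith
      have hsum := Finset.sum_le_sum (s := univ) (fun i _ => hlk i)
      rw [← Finset.mul_sum, sum_swap (k + 1) (fun i S => gramDet L S *
          ((∑ j ∈ S.erase i, g j) ^ 2 - ∑ j ∈ S.erase i, g j ^ 2))] at hsum
      have e : ∑ S ∈ lev n (k + 1), ∑ i ∈ S, gramDet L S *
          ((∑ j ∈ S.erase i, g j) ^ 2 - ∑ j ∈ S.erase i, g j ^ 2)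
          = ((k : ℝ) - 1) * ∑ i, g i * ∑ j, A i j * g j := by
        rw [hX, Finset.mul_sum]
        refine Finset.sum_congr rfl fun S hS => ?_
        rw [mem_lev] at hS
        rw [← Finset.mul_sum]
        have : ∀ i ∈ S, (∑ j ∈ S.erase i, g j) ^ 2 - ∑ j ∈ S.erase i, g j ^ 2
            = ((∑ j ∈ S, g j) ^ 2 - ∑ j ∈ S, g j ^ 2) - 2 * (∑ j ∈ S, g j) * g i
              + 2 * g i ^ 2 := by
          intro i hi
          rw [Finset.sum_erase_eq_sub hi, Finset.sum_erase_eq_sub hi]; ring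
        rw [Finset.sum_congr rfl this, Finset.sum_add_distrib, Finset.sum_sub_distrib,
          ← Finset.mul_sum, ← Finset.mul_sum, Finset.sum_const, hS]
        simp only [nsmul_eq_mul]
        push_cast
        ring
      rw [e] at hsum
      exact le_of_mul_le_mul_left hsum (by linarith))
  intro g
  have h := hT g
  rw [hX] at h
  have hm1 : ∑ i, (k : ℝ) * m i = k * ((k + 1) * ∑ S ∈ lev n (k + 1), gramDet L S) := by
    rw [← Finset.mul_sum]
    congr 1
    simp only [m, st]
    rw [sum_swap (k + 1) (fun i S => gramDet L S), Finset.mul_sum]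
    refine Finset.sum_congr rfl fun S hS => ?_
    rw [mem_lev] at hS
    simp [hS]
  have hm2 : ∑ i, (k : ℝ) * m i * g i = k * ∑ S ∈ lev n (k + 1), gramDet L S * ∑ i ∈ S, g i := by
    simp only [mul_assoc]
    rw [← Finset.mul_sum]
    congr 1
    simp only [m, st, Finset.sum_mul]
    rw [sum_swap (k + 1) (fun i S => gramDet L S * g i)]
    exact Finset.sum_congr rfl fun S hS => by rw [Finset.mul_sum]
  rw [hm1, hm2] at h
  push_cast
  have hk0 : (0 : ℝ) < k := by linarith
  refine le_of_mul_le_mul_left ?_ hk0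
  linarith

lemma LC_all (k : ℕ) (hk : 2 ≤ k) :
    ∀ L : Matrix (Fin n) (Fin n) ℝ, L.PosSemidef → LC L k := by
  induction k, hk using Nat.le_induction with
  | base => exact LC_limit 2 fun L hL => LC_two_pd hL
  | succ k hk ih => exact LC_limit (k + 1) fun L hL => LC_step k hk ih hL

/-- Weighted sum of `f` over the upward neighbours of `I`. -/
noncomputable def mf (L : Matrix (Fin n) (Fin n) ℝ) (f : Finset (Fin n) → ℝ)
    (I : Finset (Fin n)) : ℝ :=
  ∑ j ∈ Iᶜ, gramDet L (insert j I) * f (insert j I)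

lemma mf_link (L : Matrix (Fin n) (Fin n) ℝ) (f : Finset (Fin n) → ℝ)
    {I : Finset (Fin n)} {i : Fin n} (hi : i ∉ I) (h0 : L i i ≠ 0) :
    mf L f (insert i I) = L i i * mf (schur L i) (fun T => f (insert i T)) I := by
  unfold mf
  have hI : Iᶜ = insert i (insert i I)ᶜ := by
    ext j
    by_cases h : j = i
    · subst h; simp [hi]
    · simp [h]
  rw [hI, Finset.sum_insert (by simp), gramDet_schur_zero L (by simp) h0, zero_mul, zero_add,
    Finset.mul_sum]
  refine Finset.sum_congr rfl fun j hj => ?_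
  simp only [Finset.mem_compl, Finset.mem_insert, not_or] at hj
  rw [Finset.insert_comm, gramDet_insert L (by simp [hi, Ne.symm hj.1]) h0]
  ring

/-- Poincaré inequality at level `k`. -/
def PI (L : Matrix (Fin n) (Fin n) ℝ) (k : ℕ) : Prop :=
  ∀ f : Finset (Fin n) → ℝ,
    ∑ S ∈ lev n k, gramDet L S * f S ^ 2
      - (∑ S ∈ lev n k, gramDet L S * f S) ^ 2 / (∑ S ∈ lev n k, gramDet L S)
    ≤ ∑ S ∈ lev n k, gramDet L S *
        ∑ i ∈ S, (f S ^ 2 - f S * (mf L f (S.erase i) / mf L (fun _ => 1) (S.erase i)))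

lemma PI_one (L : Matrix (Fin n) (Fin n) ℝ) : PI L 1 := by
  intro f
  have h : ∀ f : Finset (Fin n) → ℝ, mf L f ∅ = ∑ j, gramDet L {j} * f {j} := by
    intro f; simp [mf]
  simp only [sum_lev_one, Finset.sum_singleton, Finset.erase_singleton, h, mul_one]
  have : ∀ j : Fin n, gramDet L {j} * (f {j} ^ 2 - f {j} *
      ((∑ j, gramDet L {j} * f {j}) / ∑ j, gramDet L {j}))
      = gramDet L {j} * f {j} ^ 2 - gramDet L {j} * f {j} *
      ((∑ j, gramDet L {j} * f {j}) / ∑ j, gramDet L {j}) := fun j => by ring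
  simp only [this, Finset.sum_sub_distrib, ← Finset.sum_mul]
  apply le_of_eq
  ring

lemma key_lemma {L : Matrix (Fin n) (Fin n) ℝ} (hL : L.PosSemidef) (k : ℕ)
    (hLC : LC L (k + 1)) (f : Finset (Fin n) → ℝ) :
    ∑ i, (∑ S ∈ (lev n (k + 1)).filter (fun S => i ∈ S), gramDet L S * f S) ^ 2
        / (∑ S ∈ (lev n (k + 1)).filter (fun S => i ∈ S), gramDet L S)
    ≤ ∑ S ∈ lev n (k + 1), gramDet L S * f S ^ 2
      + k * ((∑ S ∈ lev n (k + 1), gramDet L S * f S) ^ 2 / (∑ S ∈ lev n (k + 1), gramDet L S)) := by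
  let F : Fin n → ℝ := fun i => ∑ S ∈ (lev n (k + 1)).filter (fun S => i ∈ S), gramDet L S * f S
  let m : Fin n → ℝ := fun i => ∑ S ∈ (lev n (k + 1)).filter (fun S => i ∈ S), gramDet L S
  change ∑ i, F i ^ 2 / m i ≤ _
  have hF0 : ∀ i, m i = 0 → F i = 0 := by
    intro i hi
    have := (Finset.sum_eq_zero_iff_of_nonneg (fun S _ => gramDet_nonneg hL S)).1 hi
    exact Finset.sum_eq_zero fun S hS => by rw [this S hS, zero_mul]
  let h : Fin n → ℝ := fun i => F i / m i
  have hF : ∀ i, F i = m i * h i := by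
    intro i
    by_cases hm : m i = 0
    · rw [hF0 i hm, hm, zero_mul]
    · simp only [h]; field_simp
  have hX : ∀ i, F i ^ 2 / m i = F i * h i := fun i => by simp only [h]; ring
  simp only [hX]
  set X := ∑ i, F i * h i with hXd
  set Z := ∑ S ∈ lev n (k + 1), gramDet L S with hZ
  set W := ∑ S ∈ lev n (k + 1), gramDet L S * f S with hW
  have hZ0 : 0 ≤ Z := Finset.sum_nonneg fun S _ => gramDet_nonneg hL S
  -- identities
  have i1 : ∑ S ∈ lev n (k + 1), gramDet L S * (f S * ∑ i ∈ S, h i) = X := by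
    simp only [hXd, F, Finset.sum_mul]
    rw [sum_swap (k + 1) (fun i S => gramDet L S * f S * h i)]
    refine Finset.sum_congr rfl fun S _ => ?_
    rw [← mul_assoc, Finset.mul_sum]
  have i2 : ∑ S ∈ lev n (k + 1), gramDet L S * ∑ i ∈ S, h i ^ 2 = X := by
    have : X = ∑ i, m i * h i ^ 2 := by
      rw [hXd]; exact Finset.sum_congr rfl fun i _ => by rw [hF]; ring
    rw [this]
    simp only [m, Finset.sum_mul]
    rw [sum_swap (k + 1) (fun i S => gramDet L S * h i ^ 2)]
    exact Finset.sum_congr rfl fun S _ => by rw [Finset.mul_sum]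
  have i3 : ∑ S ∈ lev n (k + 1), gramDet L S * ∑ i ∈ S, h i = (k + 1) * W := by
    have e1 : ∑ S ∈ lev n (k + 1), gramDet L S * ∑ i ∈ S, h i = ∑ i, m i * h i := by
      simp only [m, Finset.sum_mul]
      rw [sum_swap (k + 1) (fun i S => gramDet L S * h i)]
      exact Finset.sum_congr rfl fun S _ => by rw [Finset.mul_sum]
    rw [e1]
    simp only [← hF, F]
    rw [sum_swap (k + 1) (fun i S => gramDet L S * f S), hW, Finset.mul_sum]
    refine Finset.sum_congr rfl fun S hS => ?_
    rw [mem_lev] at hS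
    simp [hS]
  have hlc := hLC h
  simp only [mul_sub, Finset.sum_sub_distrib] at hlc
  rw [i2, i3] at hlc
  set Y := ∑ S ∈ lev n (k + 1), gramDet L S * (∑ i ∈ S, h i) ^ 2 with hY
  set V := ∑ S ∈ lev n (k + 1), gramDet L S * f S ^ 2 with hV
  rcases hZ0.eq_or_lt with hz | hz
  · have hw := (Finset.sum_eq_zero_iff_of_nonneg (fun S _ => gramDet_nonneg hL S)).1 hz.symm
    have : X = 0 := by
      rw [← i2]; exact Finset.sum_eq_zero fun S hS => by rw [hw S hS, zero_mul]
    rw [this, ← hz, div_zero, mul_zero, add_zero]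
    exact Finset.sum_nonneg fun S _ => mul_nonneg (gramDet_nonneg hL S) (sq_nonneg _)
  · set c := W / Z with hc
    have hWc : W = c * Z := by rw [hc]; field_simp
    have hexp : 0 ≤ ∑ S ∈ lev n (k + 1), gramDet L S * (f S - ∑ i ∈ S, h i + k * c) ^ 2 :=
      Finset.sum_nonneg fun S _ => mul_nonneg (gramDet_nonneg hL S) (sq_nonneg _)
    have hterm : ∀ S : Finset (Fin n), gramDet L S * (f S - ∑ i ∈ S, h i + k * c) ^ 2
        = gramDet L S * f S ^ 2 + gramDet L S * (∑ i ∈ S, h i) ^ 2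
          - 2 * (gramDet L S * (f S * ∑ i ∈ S, h i)) + (k * c) ^ 2 * gramDet L S
          + (2 * k * c) * (gramDet L S * f S) - (2 * k * c) * (gramDet L S * ∑ i ∈ S, h i) := by
      intro S; ring
    simp only [hterm, Finset.sum_add_distrib, Finset.sum_sub_distrib, ← Finset.mul_sum] at hexp
    rw [i1, i3, ← hZ, ← hW, ← hY, ← hV] at hexp
    have hdiv : W ^ 2 / Z = c ^ 2 * Z := by rw [hWc]; field_simp
    rw [hdiv]
    push_cast at hlc
    have hlc2 : Y - X ≤ k * (k + 1) * (c ^ 2 * Z) := by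
      rw [hWc] at hlc
      have hp : 0 < ((k : ℝ) + 1) * Z := by positivity
      refine le_of_mul_le_mul_left ?_ hp
      linarith
    rw [hWc] at hexp
    nlinarith

lemma PI_step (k : ℕ) (hk : 1 ≤ k)
    (ih : ∀ L : Matrix (Fin n) (Fin n) ℝ, L.PosSemidef → PI L k)
    (L : Matrix (Fin n) (Fin n) ℝ) (hL : L.PosSemidef) : PI L (k + 1) := by
  intro f
  have hkey := key_lemma hL k (LC_all (k + 1) (by omega) L hL) f
  let c : Finset (Fin n) → Fin n → ℝ := fun S j =>
    f S ^ 2 - f S * (mf L f (S.erase j) / mf L (fun _ => 1) (S.erase j))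
  have hi : ∀ i, (∑ S ∈ (lev n (k + 1)).filter (fun S => i ∈ S), gramDet L S * f S ^ 2)
      - (∑ S ∈ (lev n (k + 1)).filter (fun S => i ∈ S), gramDet L S * f S) ^ 2
        / (∑ S ∈ (lev n (k + 1)).filter (fun S => i ∈ S), gramDet L S)
      ≤ ∑ S ∈ (lev n (k + 1)).filter (fun S => i ∈ S),
          gramDet L S * ∑ j ∈ S.erase i, c S j := by
    intro i
    by_cases h0 : L i i = 0
    · have hz : ∀ φ : Finset (Fin n) → ℝ,
          ∑ S ∈ (lev n (k + 1)).filter (fun S => i ∈ S), gramDet L S * φ S = 0 := fun φ =>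
        Finset.sum_eq_zero fun S hS => by
          rw [gramDet_eq_zero hL (Finset.mem_filter.1 hS).2 h0, zero_mul]
      rw [hz, hz, hz]; simp
    · have hpos : 0 < L i i := lt_of_le_of_ne hL.diag_nonneg (Ne.symm h0)
      have h1 := mul_le_mul_of_nonneg_left
        (ih (schur L i) (schur_posSemidef hL i) (fun T => f (insert i T))) hpos.le
      have hins : ∀ S ∈ (lev n (k + 1)).filter (fun S => i ∈ S), insert i (S.erase i) = S :=
        fun S hS => Finset.insert_erase (Finset.mem_filter.1 hS).2
      have e1 : L i i * ∑ T ∈ lev n k, gramDet (schur L i) T * f (insert i T) ^ 2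
          = ∑ S ∈ (lev n (k + 1)).filter (fun S => i ∈ S), gramDet L S * f S ^ 2 := by
        rw [link_sum hL i k (fun T => f (insert i T) ^ 2)]
        exact Finset.sum_congr rfl fun S hS => by rw [hins S hS]
      have e2 : L i i * ∑ T ∈ lev n k, gramDet (schur L i) T * f (insert i T)
          = ∑ S ∈ (lev n (k + 1)).filter (fun S => i ∈ S), gramDet L S * f S := by
        rw [link_sum hL i k (fun T => f (insert i T))]
        exact Finset.sum_congr rfl fun S hS => by rw [hins S hS]
      have e3 : L i i * ∑ T ∈ lev n k, gramDet (schur L i) T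
          = ∑ S ∈ (lev n (k + 1)).filter (fun S => i ∈ S), gramDet L S := by
        have := link_sum hL i k (fun T => 1)
        simpa using this
      rw [link_sum hL i k (fun T => ∑ j ∈ T, (f (insert i T) ^ 2 - f (insert i T) *
        (mf (schur L i) (fun T => f (insert i T)) (T.erase j)
          / mf (schur L i) (fun _ => 1) (T.erase j)))), mul_sub, e1] at h1
      rw [← e2, ← e3]
      have e4 : (L i i * ∑ T ∈ lev n k, gramDet (schur L i) T * f (insert i T)) ^ 2
          / (L i i * ∑ T ∈ lev n k, gramDet (schur L i) T)
          = L i i * ((∑ T ∈ lev n k, gramDet (schur L i) T * f (insert i T)) ^ 2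
            / ∑ T ∈ lev n k, gramDet (schur L i) T) := by
        rw [mul_pow, sq (L i i), mul_assoc, mul_div_mul_left _ _ h0, mul_div_assoc]
      rw [e4]
      refine h1.trans (le_of_eq ?_)
      refine Finset.sum_congr rfl fun S hS => ?_
      congr 1
      refine Finset.sum_congr rfl fun j hj => ?_
      rw [hins S hS]
      have hiS := (Finset.mem_filter.1 hS).2
      have hji := Finset.mem_erase.1 hj
      have hI : S.erase j = insert i ((S.erase i).erase j) := by
        rw [Finset.erase_right_comm, Finset.insert_erase]
        exact Finset.mem_erase.2 ⟨Ne.symm hji.1, hiS⟩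
      have hni : i ∉ (S.erase i).erase j := by simp
      simp only [c]
      rw [hI, mf_link L f hni h0, mf_link L (fun _ => 1) hni h0, mul_div_mul_left _ _ h0]
  have hsum := Finset.sum_le_sum (s := univ) (fun i _ => hi i)
  rw [Finset.sum_sub_distrib, sum_swap (k + 1) (fun i S => gramDet L S * f S ^ 2),
    sum_swap (k + 1) (fun i S => gramDet L S * ∑ j ∈ S.erase i, c S j)] at hsum
  have e1 : ∑ S ∈ lev n (k + 1), ∑ i ∈ S, gramDet L S * f S ^ 2
      = (k + 1) * ∑ S ∈ lev n (k + 1), gramDet L S * f S ^ 2 := by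
    rw [Finset.mul_sum]
    refine Finset.sum_congr rfl fun S hS => ?_
    rw [mem_lev] at hS
    simp [hS]
  have e2 : ∑ S ∈ lev n (k + 1), ∑ i ∈ S, gramDet L S * ∑ j ∈ S.erase i, c S j
      = k * ∑ S ∈ lev n (k + 1), gramDet L S * ∑ j ∈ S, c S j := by
    rw [Finset.mul_sum]
    refine Finset.sum_congr rfl fun S hS => ?_
    rw [mem_lev] at hS
    rw [← Finset.mul_sum, Finset.sum_congr rfl (fun i hi => Finset.sum_erase_eq_sub hi),
      Finset.sum_sub_distrib, Finset.sum_const, hS, nsmul_eq_mul]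
    push_cast
    ring
  rw [e1, e2] at hsum
  have hk0 : (0 : ℝ) < k := by exact_mod_cast hk
  change _ ≤ ∑ S ∈ lev n (k + 1), gramDet L S * ∑ j ∈ S, c S j
  refine le_of_mul_le_mul_left ?_ hk0
  linarith

lemma PI_all (k : ℕ) (hk : 1 ≤ k) :
    ∀ L : Matrix (Fin n) (Fin n) ℝ, L.PosSemidef → PI L k := by
  induction k, hk using Nat.le_induction with
  | base => exact fun L _ => PI_one L
  | succ k hk ih => exact PI_step k hk ih

lemma up_sum {k : ℕ} {I : Finset (Fin n)} (hI : I.card + 1 = k) (φ : Finset (Fin n) → ℝ) :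
    ∑ b ∈ (lev n k).filter (fun b => I ⊆ b), φ b = ∑ j ∈ Iᶜ, φ (insert j I) := by
  have : (lev n k).filter (fun b => I ⊆ b) = Iᶜ.image (fun j => insert j I) := by
    ext b
    simp only [Finset.mem_filter, mem_lev, Finset.mem_image, Finset.mem_compl]
    rw [Finset.exists_eq_insert_iff, hI]
    constructor
    · rintro ⟨h1, h2⟩; exact ⟨h2, h1.symm⟩
    · rintro ⟨h1, h2⟩; exact ⟨h2.symm, h1⟩
  rw [this, Finset.sum_image]
  intro a ha b hb hab
  simp only [Finset.coe_compl, Set.mem_compl_iff, Finset.mem_coe] at ha hb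
  exact (Finset.insert_inj ha).1 hab

lemma dpp_eq {L : Matrix (Fin n) (Fin n) ℝ} {k : ℕ} {x : Finset (Fin n)} (hx : x.card = k) :
    dpp L k x = gramDet L x / ∑ T ∈ lev n k, gramDet L T := by
  simp [dpp, hx, lev]

lemma flow_term {L : Matrix (Fin n) (Fin n) ℝ} (hL : L.PosSemidef) {k : ℕ}
    (hZ : 0 < ∑ T ∈ lev n k, gramDet L T)
    (S : Finset (Finset (Fin n))) {a : Finset (Fin n)} (ha : a.card = k) {i : Fin n} (hi : i ∈ a)
    (hw : 0 < gramDet L a) :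
    ∑ b ∈ lev n k \ S, (if a.erase i ⊆ b ∧ b.card = k then
        dpp L k b / condZ (dpp L k) (a.erase i) else 0)
      = 1 - mf L (fun x => if x ∈ S then 1 else 0) (a.erase i)
          / mf L (fun _ => 1) (a.erase i) := by
  set Z := ∑ T ∈ lev n k, gramDet L T with hZd
  set I := a.erase i with hId
  have hI : I.card + 1 = k := by
    rw [← ha]; exact Finset.card_erase_add_one hi
  have hcard : ∀ j ∈ Iᶜ, (insert j I).card = k := fun j hj => by
    rw [Finset.card_insert_of_notMem (Finset.mem_compl.1 hj), hI]
  have hz : mf L (fun _ => 1) I = ∑ j ∈ Iᶜ, gramDet L (insert j I) := by simp [mf]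
  have hc : condZ (dpp L k) I = mf L (fun _ => 1) I / Z := by
    rw [hz, Finset.sum_div]
    exact Finset.sum_congr rfl fun j hj => dpp_eq (hcard j hj)
  have hzpos : 0 < mf L (fun _ => 1) I := by
    rw [hz]
    refine Finset.sum_pos' (fun j _ => gramDet_nonneg hL _) ⟨i, by simp [hId], ?_⟩
    rw [hId, Finset.insert_erase hi]; exact hw
  have e1 : ∑ b ∈ lev n k \ S, (if I ⊆ b ∧ b.card = k then
        dpp L k b / condZ (dpp L k) I else 0)
      = ∑ b ∈ (lev n k).filter (fun b => I ⊆ b),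
          gramDet L b * (1 - (if b ∈ S then 1 else 0)) / mf L (fun _ => 1) I := by
    rw [Finset.sum_filter, Finset.sdiff_eq_filter, Finset.sum_filter]
    refine Finset.sum_congr rfl fun b hb => ?_
    rw [mem_lev] at hb
    by_cases h1 : b ∈ S <;> by_cases h2 : I ⊆ b <;> simp [h1, h2, hb]
    rw [hc, dpp_eq hb, ← hZd, div_div_div_cancel_right₀ hZ.ne']
  rw [e1, up_sum hI, ← Finset.sum_div]
  simp only [mul_sub, mul_one, Finset.sum_sub_distrib]
  rw [← hz, sub_div, div_self hzpos.ne']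
  rfl

lemma main_bound {L : Matrix (Fin n) (Fin n) ℝ} (hL : L.PosSemidef) {k : ℕ} (hk : 1 ≤ k)
    (hZ : 0 < ∑ T ∈ lev n k, gramDet L T)
    (S : Finset (Finset (Fin n))) (hS : ∀ x ∈ S, x.card = k)
    (hhalf : ∑ x ∈ S, dpp L k x ≤ 1 / 2) :
    (∑ x ∈ S, dpp L k x) / (2 * (k : ℝ) ^ 2) ≤ flow (dpp L k) k S (lev n k \ S) := by
  have hPI := PI_all k hk L hL (fun x => if x ∈ S then 1 else 0)
  set Z := ∑ T ∈ lev n k, gramDet L T with hZd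
  set p := ∑ x ∈ S, dpp L k x with hp
  have hk1 : (1 : ℝ) ≤ k := by exact_mod_cast hk
  have hSsub : S ⊆ lev n k := fun x hx => mem_lev.2 (hS x hx)
  have hind : ∀ φ : Finset (Fin n) → ℝ,
      ∑ x ∈ lev n k, (if x ∈ S then φ x else 0) = ∑ x ∈ S, φ x := by
    intro φ
    rw [Finset.sum_ite_mem, Finset.inter_eq_right.2 hSsub]
  have hZp : ∑ x ∈ S, gramDet L x = Z * p := by
    rw [hp, Finset.mul_sum]
    refine Finset.sum_congr rfl fun x hx => ?_
    rw [dpp_eq (hS x hx), ← hZd]; field_simp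
  have hp0 : 0 ≤ p := by
    have : 0 ≤ Z * p := hZp ▸ Finset.sum_nonneg fun x _ => gramDet_nonneg hL x
    exact nonneg_of_mul_nonneg_right this hZ
  have e1 : ∑ x ∈ lev n k, gramDet L x * (if x ∈ S then (1 : ℝ) else 0) ^ 2 = Z * p := by
    rw [← hZp, ← hind]
    exact Finset.sum_congr rfl fun x _ => by split_ifs <;> simp
  have e2 : ∑ x ∈ lev n k, gramDet L x * (if x ∈ S then (1 : ℝ) else 0) = Z * p := by
    rw [← hZp, ← hind]
    exact Finset.sum_congr rfl fun x _ => by split_ifs <;> simp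
  have e3 : ∑ x ∈ lev n k, gramDet L x * ∑ i ∈ x, ((if x ∈ S then (1 : ℝ) else 0) ^ 2
      - (if x ∈ S then (1 : ℝ) else 0) * (mf L (fun x => if x ∈ S then 1 else 0) (x.erase i)
        / mf L (fun _ => 1) (x.erase i))) = Z * k * flow (dpp L k) k S (lev n k \ S) := by
    have h1 : ∀ x ∈ lev n k, gramDet L x * ∑ i ∈ x, ((if x ∈ S then (1 : ℝ) else 0) ^ 2
      - (if x ∈ S then (1 : ℝ) else 0) * (mf L (fun x => if x ∈ S then 1 else 0) (x.erase i)
        / mf L (fun _ => 1) (x.erase i)))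
        = if x ∈ S then gramDet L x * ∑ i ∈ x, (1 -
          mf L (fun x => if x ∈ S then 1 else 0) (x.erase i)
        / mf L (fun _ => 1) (x.erase i)) else 0 := by
      intro x _
      split_ifs <;> simp
    rw [Finset.sum_congr rfl h1, hind, flow, Finset.mul_sum]
    refine Finset.sum_congr rfl fun a ha => ?_
    have hac := hS a ha
    rcases (gramDet_nonneg hL a).eq_or_lt with hw | hw
    · rw [← hw]
      have : dpp L k a = 0 := by rw [dpp_eq hac, ← hw, zero_div]
      simp [this]
    · have h2 : ∑ b ∈ lev n k \ S, dpp L k a * gibbsP (dpp L k) k a b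
          = dpp L k a * (1 / k) * ∑ i ∈ a, (1 -
          mf L (fun x => if x ∈ S then 1 else 0) (a.erase i)
        / mf L (fun _ => 1) (a.erase i)) := by
        rw [Finset.sum_congr rfl (fun i hi => (flow_term hL hZ S hac hi hw).symm),
          Finset.sum_comm, Finset.mul_sum]
        refine Finset.sum_congr rfl fun b _ => ?_
        rw [gibbsP, mul_assoc]
      rw [h2, dpp_eq hac, ← hZd]
      have : (k : ℝ) ≠ 0 := by positivity
      field_simp
  rw [e1, e2, e3] at hPI
  set Φ := flow (dpp L k) k S (lev n k \ S) with hΦ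
  have h3 : (Z * p) ^ 2 / Z = Z * p ^ 2 := by field_simp
  rw [h3] at hPI
  have h4 : p - p ^ 2 ≤ k * Φ := by
    refine le_of_mul_le_mul_left ?_ hZ
    linarith
  have h5 : p / 2 ≤ k * Φ := by nlinarith
  rw [div_le_iff₀ (by positivity)]
  have h6 : 0 ≤ k * Φ := by linarith
  nlinarith

end GibbsAux

/-- The conductance of the Gibbs sampler for any discrete `k`-DPP is at least
`1/(Ck²)` for an absolute constant `C`, independently of the ground-set size `n`. -/
theorem gibbs_sampler_conductance_discrete :
    ∃ C : ℝ, 0 < C ∧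
      ∀ (n k : ℕ), 1 ≤ k → k ≤ n →
        ∀ L : Matrix (Fin n) (Fin n) ℝ, L.PosSemidef →
        (0 < ∑ T ∈ univ.filter (fun T : Finset (Fin n) => T.card = k), gramDet L T) →
        ∀ S : Finset (Finset (Fin n)), (∀ x ∈ S, x.card = k) →
          (∑ x ∈ S, dpp L k x) ≤ 1 / 2 →
          (∑ x ∈ S, dpp L k x) / (C * (k : ℝ) ^ 2)
            ≤ flow (dpp L k) k S
                ((univ.filter (fun T : Finset (Fin n) => T.card = k)) \ S) := by
  refine ⟨2, by norm_num, ?_⟩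
  intro n k hk _ L hL hZ S hS hhalf
  exact GibbsAux.main_bound hL hk hZ S hS hhalf
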